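/- Reflection of complements of principal filters in nested multiset nwqos: for every nested multiset nwqo A of one of the forms M(Γ_0), M(Σ_{i=1}^d B_i) with d ≥ 2, M(M(B)), or Σ_{i=1}^d M(B_i) with d ≥ 2 (B and all B_i nested multiset nwqos), every n ≥ 1, and every a ∈ A with |a|_A ≤ n, there exists a reflection r : A/a ↪ R_n(A,a). -/

import Mathlib

/-- Syntax of nested multiset normed wqos (nwqos): the smallest class containing the empty
nwqo `Γ₀` and closed under (binary, hence finite) disjoint sums and the finite-multiset
operation `M(·)`. -/
inductive NMW : Type
  | empty : NMW
  | sum : NMW → NMW → NMW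
  | mset : NMW → NMW

namespace NMW

/-- The carrier of a nested multiset nwqo. -/
def El : NMW → Type
  | .empty => Empty
  | .sum A B => El A ⊕ El B
  | .mset A => Multiset (El A)

/-- The quasi-order of a nested multiset nwqo. On a disjoint sum, elements of different
summands are incomparable; on `M(A)`, `m ≤ m'` iff there is a multiplicity-respecting
injection `f` of `m` into `m'` with `a ≤ f(a)` for every `a ∈ m`. -/
def le : (A : NMW) → El A → El A → Prop
  | .empty, x, _ => x.elim
  | .sum A B, x, y => Sum.LiftRel (fun u v => le A u v) (fun u v => le B u v) x y
  | .mset A, m, m' => ∃ t : Multiset (El A), t ≤ m' ∧ Multiset.Rel (fun u v => le A u v) m t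

/-- The norm of a nested multiset nwqo: `|m| = Σ_{a ∈ m} (1 + |a|)` on multisets. -/
def norm : (A : NMW) → El A → ℕ
  | .empty, x => x.elim
  | .sum A B, x => Sum.elim (norm A) (norm B) x
  | .mset A, m => (m.map (fun a => 1 + norm A a)).sum

/-- `A·d`: the `d`-fold disjoint sum of `A` (the empty sum being `Γ₀`). -/
def ncopy (B : NMW) : ℕ → NMW
  | 0 => .empty
  | 1 => B
  | m + 2 => .sum B (ncopy B (m + 1))

/-- Apply `g` under every summand of the form `M(C)` of a finite disjoint sum of
multiset nwqos, replacing `M(C)` by `M(g C)`. -/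
def mapM (g : NMW → NMW) : NMW → NMW
  | .empty => .empty
  | .sum X Y => .sum (mapM g X) (mapM g Y)
  | .mset C => .mset (g C)

/-- The finite disjoint sum of a list of nwqos. -/
def sumList : List NMW → NMW
  | [] => .empty
  | [X] => X
  | X :: Y :: rest => .sum X (sumList (Y :: rest))

/-- `Σ_{i=1}^d M(B_i)` with `d ≥ 1`: a (nonempty) finite disjoint sum of multiset nwqos. -/
inductive SumOfMsets : NMW → Prop
  | mset (B : NMW) : SumOfMsets (.mset B)
  | sum {X Y : NMW} : SumOfMsets X → SumOfMsets Y → SumOfMsets (.sum X Y)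

/-- The forms of nested multiset nwqos covered by the recursive definition of `R_n(A,a)`:
`M(Γ₀)`, `M(Σ_{i=1}^d B_i)` with `d ≥ 2`, `M(M(B))` (all of which are `M` of something),
or `Σ_{i=1}^d M(B_i)` with `d ≥ 2`. -/
def GoodForm (A : NMW) : Prop :=
  (∃ B : NMW, A = .mset B) ∨
  (∃ X Y : NMW, A = .sum X Y ∧ SumOfMsets X ∧ SumOfMsets Y)

/-- The graph of the recursive definition of `R_n(A,a)`:
(i) `R_n(M(Γ₀), ∅) = Γ₀`;
(ii) if `A = M(B₁ + B₂)` and `b_i` is the restriction of the multiset `a` to elements of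
`B_i`, writing `R_n(M(B_i), b_i) = Σ_j M(B_i^j)`, then
`R_n(A,a) = Σ_j M(B_1^j + B₂) + Σ_j M(B₁ + B_2^j)`;
(iii) if `A = M(M(B))` and `a = {a_1,…,a_d}`, then
`R_n(A,a) = Σ_{i=1}^d M(B·(n−1) + R_n(M(B), a_i))`;
(iv) if `A = A₁ + A₂` and `a` lies in the summand `A_i`, then `R_n(A,a)` replaces that
summand by `R_n(A_i, a)`. -/
inductive RRel (n : ℕ) : (A : NMW) → El A → NMW → Prop
  | base (a : El (.mset .empty)) : RRel n (.mset .empty) a .empty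
  | msum {B₁ B₂ : NMW} (a : Multiset (El B₁ ⊕ El B₂)) {R₁ R₂ : NMW}
      (h₁ : RRel n (.mset B₁) (a.filterMap Sum.getLeft?) R₁)
      (h₂ : RRel n (.mset B₂) (a.filterMap Sum.getRight?) R₂) :
      RRel n (.mset (.sum B₁ B₂)) a
        (.sum (mapM (fun C => .sum C B₂) R₁) (mapM (fun C => .sum B₁ C) R₂))
  | mm {B : NMW} (L : List (Multiset (El B))) (Rs : List NMW)
      (hlen : L.length = Rs.length)
      (h : ∀ (i : ℕ) (hi : i < L.length) (hj : i < Rs.length),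
          RRel n (.mset B) (L.get ⟨i, hi⟩) (Rs.get ⟨i, hj⟩)) :
      RRel n (.mset (.mset B)) (Multiset.ofList L)
        (sumList (Rs.map (fun Ri => .mset (.sum (ncopy B (n - 1)) Ri))))
  | sumL {A₁ A₂ : NMW} (a : El A₁) {R₁ : NMW} (h : RRel n A₁ a R₁) :
      RRel n (.sum A₁ A₂) (Sum.inl a) (.sum R₁ A₂)
  | sumR {A₁ A₂ : NMW} (a : El A₂) {R₂ : NMW} (h : RRel n A₂ a R₂) :
      RRel n (.sum A₁ A₂) (Sum.inr a) (.sum A₁ R₂)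

end NMW

namespace NMW

/-- Multiset domination order. -/
def MLe {α : Type} (r : α → α → Prop) (m m' : Multiset α) : Prop :=
  ∃ t : Multiset α, t ≤ m' ∧ Multiset.Rel r m t

theorem MLe.zero {α : Type} {r : α → α → Prop} (m : Multiset α) : MLe r 0 m :=
  ⟨0, Multiset.zero_le _, Multiset.Rel.zero⟩

theorem MLe.add {α : Type} {r : α → α → Prop} {a b a' b' : Multiset α}
    (h : MLe r a a') (h' : MLe r b b') : MLe r (a + b) (a' + b') := by
  obtain ⟨t, ht, hr⟩ := h
  obtain ⟨s, hs, hr'⟩ := h'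
  exact ⟨t + s, add_le_add ht hs, hr.add hr'⟩

theorem MLe.cons {α : Type} {r : α → α → Prop} {a a' : α} {m m' : Multiset α}
    (h : r a a') (h' : MLe r m m') : MLe r (a ::ₘ m) (a' ::ₘ m') := by
  obtain ⟨t, ht, hr⟩ := h'
  exact ⟨a' ::ₘ t, (Multiset.cons_le_cons_iff _).2 ht, hr.cons h⟩

theorem MLe.card_le {α : Type} {r : α → α → Prop} {m m' : Multiset α}
    (h : MLe r m m') : Multiset.card m ≤ Multiset.card m' := by
  obtain ⟨t, ht, hr⟩ := h
  rw [Multiset.card_eq_card_of_rel hr]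
  exact Multiset.card_le_card ht

theorem MLe.map {α β : Type} {r : α → α → Prop} {s : β → β → Prop} (f : α → β)
    (hf : ∀ x y, r x y → s (f x) (f y)) {m m' : Multiset α}
    (h : MLe r m m') : MLe s (m.map f) (m'.map f) := by
  obtain ⟨t, ht, hr⟩ := h
  refine ⟨t.map f, Multiset.map_le_map ht, ?_⟩
  rw [Multiset.rel_map]
  exact hr.mono (fun x _ y _ hxy => hf x y hxy)

theorem MLe.left {α β : Type} {r : α → α → Prop} {s : β → β → Prop}
    {m m' : Multiset (α ⊕ β)} (h : MLe (Sum.LiftRel r s) m m') :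
    MLe r (m.filterMap Sum.getLeft?) (m'.filterMap Sum.getLeft?) := by
  obtain ⟨t, ht, hr⟩ := h
  refine ⟨t.filterMap Sum.getLeft?, Multiset.filterMap_le_filterMap _ ht, ?_⟩
  clear ht
  induction hr with
  | zero => simp
  | cons hab _ ih =>
    cases hab with
    | inl h => simpa [Multiset.filterMap_cons] using ih.cons h
    | inr h => simpa [Multiset.filterMap_cons] using ih

theorem MLe.right {α β : Type} {r : α → α → Prop} {s : β → β → Prop}
    {m m' : Multiset (α ⊕ β)} (h : MLe (Sum.LiftRel r s) m m') :
    MLe s (m.filterMap Sum.getRight?) (m'.filterMap Sum.getRight?) := by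
  obtain ⟨t, ht, hr⟩ := h
  refine ⟨t.filterMap Sum.getRight?, Multiset.filterMap_le_filterMap _ ht, ?_⟩
  clear ht
  induction hr with
  | zero => simp
  | cons hab _ ih =>
    cases hab with
    | inr h => simpa [Multiset.filterMap_cons] using ih.cons h
    | inl h => simpa [Multiset.filterMap_cons] using ih

theorem filterMap_left {α β : Type} (m : Multiset α) (m' : Multiset β) :
    (m.map Sum.inl + m'.map Sum.inr).filterMap Sum.getLeft? = m := by
  induction m using Multiset.induction_on with
  | empty =>
    induction m' using Multiset.induction_on with
    | empty => simp
    | cons b m' ih => simpa [Multiset.filterMap_cons] using ih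
  | cons a m ih => simpa [Multiset.filterMap_cons] using ih

theorem filterMap_right {α β : Type} (m : Multiset α) (m' : Multiset β) :
    (m.map Sum.inl + m'.map Sum.inr).filterMap Sum.getRight? = m' := by
  induction m using Multiset.induction_on with
  | empty =>
    induction m' using Multiset.induction_on with
    | empty => simp
    | cons b m' ih => simpa [Multiset.filterMap_cons] using ih
  | cons a m ih => simpa [Multiset.filterMap_cons] using ih

theorem split_sum {α β : Type} (m : Multiset (α ⊕ β)) :
    m = (m.filterMap Sum.getLeft?).map Sum.inl + (m.filterMap Sum.getRight?).map Sum.inr := by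
  induction m using Multiset.induction_on with
  | empty => simp
  | cons a m ih =>
    cases a with
    | inl a => simpa [Multiset.filterMap_cons] using ih
    | inr a => simpa [Multiset.filterMap_cons] using ih

theorem MLe.of_parts {α β : Type} {r : α → α → Prop} {s : β → β → Prop}
    {m m' : Multiset (α ⊕ β)}
    (h : MLe r (m.filterMap Sum.getLeft?) (m'.filterMap Sum.getLeft?))
    (h' : MLe s (m.filterMap Sum.getRight?) (m'.filterMap Sum.getRight?)) :
    MLe (Sum.LiftRel r s) m m' := by
  rw [split_sum m, split_sum m']
  exact (h.map Sum.inl (fun _ _ hxy => Sum.LiftRel.inl hxy)).add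
    (h'.map Sum.inr (fun _ _ hxy => Sum.LiftRel.inr hxy))

theorem MLe.parts {α β : Type} {r : α → α → Prop} {s : β → β → Prop}
    {m m' : Multiset α} {k k' : Multiset β}
    (h : MLe (Sum.LiftRel r s) (m.map Sum.inl + k.map Sum.inr) (m'.map Sum.inl + k'.map Sum.inr)) :
    MLe r m m' ∧ MLe s k k' := by
  have h1 := h.left
  have h2 := h.right
  rw [filterMap_left, filterMap_left] at h1
  rw [filterMap_right, filterMap_right] at h2
  exact ⟨h1, h2⟩

theorem rel_comp {α β γ : Type} {r : α → β → Prop} {s : β → γ → Prop} {q : α → γ → Prop}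
    (H : ∀ a b c, r a b → s b c → q a c) {m : Multiset α} {k : Multiset β} {l : Multiset γ}
    (h : Multiset.Rel r m k) (h' : Multiset.Rel s k l) : Multiset.Rel q m l := by
  induction h generalizing l with
  | zero => rw [Multiset.rel_zero_left] at h'; subst h'; exact Multiset.Rel.zero
  | cons hab _ ih =>
    rw [Multiset.rel_cons_left] at h'
    obtain ⟨c, l', hc, hl', rfl⟩ := h'
    exact (ih hl').cons (H _ _ _ hab hc)

theorem MLe.pull {α β : Type} {r : α → α → Prop} {s : β → β → Prop} {ρ : α → β → Prop}
    (H : ∀ x y x' y', ρ x y → ρ x' y' → s y y' → r x x')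
    {m m' : Multiset α} {k k' : Multiset β} (h : Multiset.Rel ρ m k) (h' : Multiset.Rel ρ m' k')
    (hk : MLe s k k') : MLe r m m' := by
  obtain ⟨t, ht, hr⟩ := hk
  obtain ⟨v, rfl⟩ := Multiset.le_iff_exists_add.1 ht
  obtain ⟨t', v', h1, _, rfl⟩ := Multiset.rel_add_right.1 h'
  refine ⟨t', Multiset.le_add_right _ _, ?_⟩
  have h2 : Multiset.Rel (fun b a => ρ a b) t t' := Multiset.rel_flip.2 h1
  have h3 : Multiset.Rel (fun a b => ∃ c, ρ a c ∧ s c b) m t :=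
    rel_comp (fun a b c hab hbc => ⟨b, hab, hbc⟩) h hr
  exact rel_comp (fun a b c ⟨d, hd, hdb⟩ hcb => H _ _ _ _ hd hcb hdb) h3 h2

open Classical in
theorem greedy {α : Type} {r : α → α → Prop} (a : Multiset α) :
    ∀ x : Multiset α, (∀ b ∈ a, Multiset.card a ≤ Multiset.card (x.filter (r b))) → MLe r a x := by
  induction a using Multiset.induction_on with
  | empty => intro x _; exact MLe.zero x
  | cons b a ih =>
    intro x hx
    have hb := hx b (Multiset.mem_cons_self b a)
    rw [Multiset.card_cons] at hb
    obtain ⟨y, hy⟩ := Multiset.card_pos_iff_exists_mem.1 (lt_of_lt_of_le (Nat.succ_pos _) hb)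
    rw [Multiset.mem_filter] at hy
    obtain ⟨x', rfl⟩ := Multiset.exists_cons_of_mem hy.1
    refine (ih x' ?_).cons hy.2
    intro c hc
    have h := hx c (Multiset.mem_cons_of_mem hc)
    rw [Multiset.card_cons, Multiset.filter_cons, Multiset.card_add] at h
    split_ifs at h
    · simp at h; omega
    · simp at h; omega

/-- Norm of a multiset. -/
def mn {α : Type} (N : α → ℕ) (m : Multiset α) : ℕ := (m.map (fun a => 1 + N a)).sum

theorem mn_add {α : Type} (N : α → ℕ) (m m' : Multiset α) : mn N (m + m') = mn N m + mn N m' := by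
  simp [mn]

theorem mn_map {α β : Type} (N : β → ℕ) (f : α → β) (m : Multiset α) :
    mn N (m.map f) = mn (fun a => N (f a)) m := by
  simp [mn]

theorem mn_cons {α : Type} (N : α → ℕ) (a : α) (m : Multiset α) :
    mn N (a ::ₘ m) = 1 + N a + mn N m := by
  simp [mn]

theorem mn_zero {α : Type} (N : α → ℕ) : mn N 0 = 0 := by simp [mn]

theorem card_le_mn {α : Type} (N : α → ℕ) (m : Multiset α) : Multiset.card m ≤ mn N m := by
  induction m using Multiset.induction_on with
  | empty => simp
  | cons a m ih => rw [mn_cons, Multiset.card_cons]; omega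

theorem le_mn {α : Type} (N : α → ℕ) {m : Multiset α} {a : α} (h : a ∈ m) : N a ≤ mn N m := by
  obtain ⟨m, rfl⟩ := Multiset.exists_cons_of_mem h
  rw [mn_cons]; omega

theorem mn_rel {α β : Type} {N : α → ℕ} {N' : β → ℕ} {ρ : α → β → Prop}
    (H : ∀ x y, ρ x y → N' y ≤ N x) {m : Multiset α} {k : Multiset β}
    (h : Multiset.Rel ρ m k) : mn N' k ≤ mn N m := by
  induction h with
  | zero => simp [mn]
  | cons hab _ ih =>
    rw [mn_cons, mn_cons]
    have := H _ _ hab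
    omega

theorem mn_split {α β : Type} (N : α → ℕ) (N' : β → ℕ) (m : Multiset (α ⊕ β)) :
    mn (Sum.elim N N') m =
      mn N (m.filterMap Sum.getLeft?) + mn N' (m.filterMap Sum.getRight?) := by
  conv_lhs => rw [split_sum m]
  rw [mn_add, mn_map, mn_map]
  rfl

theorem le_mset (A : NMW) (m m' : Multiset (El A)) : le (.mset A) m m' ↔ MLe (le A) m m' := Iff.rfl
theorem norm_mset (A : NMW) (m : Multiset (El A)) : norm (.mset A) m = mn (norm A) m := rfl
theorem le_sum (A B : NMW) (x y : El A ⊕ El B) :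
    le (.sum A B) x y ↔ Sum.LiftRel (le A) (le B) x y := Iff.rfl
theorem norm_sum (A B : NMW) (x : El A ⊕ El B) :
    norm (.sum A B) x = Sum.elim (norm A) (norm B) x := rfl

/-- Relational form of a reflection from the part `P` of `A` to `R`. -/
def Rf (A : NMW) (P : El A → Prop) (R : NMW) : Prop :=
  ∃ ρ : El A → El R → Prop, (∀ x, P x → ∃ y, ρ x y) ∧
    (∀ x y, ρ x y → norm R y ≤ norm A x) ∧
    (∀ x y x' y', ρ x y → ρ x' y' → le R y y' → le A x x')

theorem pairL (B R : NMW) : ∃ pr : El R → Multiset (El B) → El (mapM (fun C => .sum C B) R),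
    (∀ y m, norm _ (pr y m) = norm R y + mn (norm B) m) ∧
    (∀ y m y' m', le _ (pr y m) (pr y' m') → le R y y' ∧ MLe (le B) m m') := by
  induction R with
  | empty => exact ⟨fun y => y.elim, fun y => y.elim, fun y => y.elim⟩
  | sum X Y ihX ihY =>
    obtain ⟨p, hp1, hp2⟩ := ihX
    obtain ⟨q, hq1, hq2⟩ := ihY
    refine ⟨fun y m => Sum.elim (fun u => Sum.inl (p u m)) (fun u => Sum.inr (q u m)) y, ?_, ?_⟩
    · rintro (y | y) m
      · exact hp1 y m
      · exact hq1 y m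
    · rintro (y | y) m (y' | y') m' h
      · cases h with | inl h => exact ⟨Sum.LiftRel.inl (hp2 _ _ _ _ h).1, (hp2 _ _ _ _ h).2⟩
      · cases h
      · cases h
      · cases h with | inr h => exact ⟨Sum.LiftRel.inr (hq2 _ _ _ _ h).1, (hq2 _ _ _ _ h).2⟩
  | mset C _ =>
    refine ⟨fun (y : Multiset (El C)) m =>
      (y.map Sum.inl + m.map Sum.inr : Multiset (El C ⊕ El B)), ?_, ?_⟩
    · intro (y : Multiset (El C)) m
      change mn (Sum.elim (norm C) (norm B)) (y.map Sum.inl + m.map Sum.inr) = mn (norm C) y + _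
      rw [mn_add, mn_map, mn_map]
      rfl
    · intro y m y' m' h
      exact MLe.parts h

theorem pairR (B R : NMW) : ∃ pr : El R → Multiset (El B) → El (mapM (fun C => .sum B C) R),
    (∀ y m, norm _ (pr y m) = norm R y + mn (norm B) m) ∧
    (∀ y m y' m', le _ (pr y m) (pr y' m') → le R y y' ∧ MLe (le B) m m') := by
  induction R with
  | empty => exact ⟨fun y => y.elim, fun y => y.elim, fun y => y.elim⟩
  | sum X Y ihX ihY =>
    obtain ⟨p, hp1, hp2⟩ := ihX
    obtain ⟨q, hq1, hq2⟩ := ihY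
    refine ⟨fun y m => Sum.elim (fun u => Sum.inl (p u m)) (fun u => Sum.inr (q u m)) y, ?_, ?_⟩
    · rintro (y | y) m
      · exact hp1 y m
      · exact hq1 y m
    · rintro (y | y) m (y' | y') m' h
      · cases h with | inl h => exact ⟨Sum.LiftRel.inl (hp2 _ _ _ _ h).1, (hp2 _ _ _ _ h).2⟩
      · cases h
      · cases h
      · cases h with | inr h => exact ⟨Sum.LiftRel.inr (hq2 _ _ _ _ h).1, (hq2 _ _ _ _ h).2⟩
  | mset C _ =>
    refine ⟨fun (y : Multiset (El C)) m =>
      (m.map Sum.inl + y.map Sum.inr : Multiset (El B ⊕ El C)), ?_, ?_⟩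
    · intro (y : Multiset (El C)) m
      change mn (Sum.elim (norm B) (norm C)) (m.map Sum.inl + y.map Sum.inr) = mn (norm C) y + _
      rw [mn_add, mn_map, mn_map, add_comm]
      rfl
    · intro y m y' m' h
      exact (MLe.parts h).symm

theorem rf_msum {B₁ B₂ R₁ R₂ : NMW} (a : Multiset (El B₁ ⊕ El B₂))
    (h₁ : Rf (.mset B₁) (fun x => ¬ le (.mset B₁) (a.filterMap Sum.getLeft?) x) R₁)
    (h₂ : Rf (.mset B₂) (fun x => ¬ le (.mset B₂) (a.filterMap Sum.getRight?) x) R₂) :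
    Rf (.mset (.sum B₁ B₂)) (fun x => ¬ le (.mset (.sum B₁ B₂)) a x)
      (.sum (mapM (fun C => .sum C B₂) R₁) (mapM (fun C => .sum B₁ C) R₂)) := by
  obtain ⟨ρ, e1, n1, r1⟩ := h₁
  obtain ⟨σ, e2, n2, r2⟩ := h₂
  obtain ⟨p, pn, pr⟩ := pairL B₂ R₁
  obtain ⟨q, qn, qr⟩ := pairR B₁ R₂
  refine ⟨fun (x : Multiset (El B₁ ⊕ El B₂)) z =>
    (∃ y, ρ (x.filterMap Sum.getLeft?) y ∧ z = Sum.inl (p y (x.filterMap Sum.getRight?))) ∨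
    (∃ y, σ (x.filterMap Sum.getRight?) y ∧ z = Sum.inr (q y (x.filterMap Sum.getLeft?))),
    ?_, ?_, ?_⟩
  · intro (x : Multiset (El B₁ ⊕ El B₂)) hx
    by_cases hl : le (.mset B₁) (a.filterMap Sum.getLeft?) (x.filterMap Sum.getLeft?)
    · by_cases hr : le (.mset B₂) (a.filterMap Sum.getRight?) (x.filterMap Sum.getRight?)
      · exact absurd (MLe.of_parts hl hr) hx
      · obtain ⟨y, hy⟩ := e2 _ hr
        exact ⟨_, Or.inr ⟨y, hy, rfl⟩⟩
    · obtain ⟨y, hy⟩ := e1 _ hl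
      exact ⟨_, Or.inl ⟨y, hy, rfl⟩⟩
  · intro (x : Multiset (El B₁ ⊕ El B₂)) z hz
    change _ ≤ mn (Sum.elim (norm B₁) (norm B₂)) x
    rw [mn_split]
    rcases hz with ⟨y, hy, rfl⟩ | ⟨y, hy, rfl⟩
    · have := n1 _ _ hy
      rw [norm_mset] at this
      change norm _ (p y _) ≤ _
      rw [pn]; omega
    · have := n2 _ _ hy
      rw [norm_mset] at this
      change norm _ (q y _) ≤ _
      rw [qn]; omega
  · intro (x : Multiset (El B₁ ⊕ El B₂)) z (x' : Multiset (El B₁ ⊕ El B₂)) z' hz hz' hle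
    rcases hz with ⟨y, hy, rfl⟩ | ⟨y, hy, rfl⟩ <;> rcases hz' with ⟨y', hy', rfl⟩ | ⟨y', hy', rfl⟩
    · cases hle with
      | inl h => exact MLe.of_parts (r1 _ _ _ _ hy hy' (pr _ _ _ _ h).1) (pr _ _ _ _ h).2
    · cases hle
    · cases hle
    · cases hle with
      | inr h => exact MLe.of_parts (qr _ _ _ _ h).2 (r2 _ _ _ _ hy hy' (qr _ _ _ _ h).1)

/-- Store a list of multisets over `B` as one multiset over `B·k`. -/
def cop (B : NMW) : (k : ℕ) → List (Multiset (El B)) → Multiset (El (ncopy B k))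
  | 0, _ => 0
  | 1, W => W.headD 0
  | m + 2, W =>
    ((W.headD 0).map Sum.inl + (cop B (m + 1) W.tail).map Sum.inr :
      Multiset (El B ⊕ El (ncopy B (m + 1))))

theorem mn_cop (B : NMW) (k : ℕ) (W : List (Multiset (El B))) :
    mn (norm (ncopy B k)) (cop B k W) ≤ mn (mn (norm B)) (W : Multiset (Multiset (El B))) := by
  induction k using Nat.twoStepInduction generalizing W with
  | zero => simp [cop, mn]
  | one =>
    cases W with
    | nil => exact Nat.zero_le _
    | cons w W =>
      rw [← Multiset.cons_coe, mn_cons]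
      change mn (norm B) w ≤ _
      omega
  | more k _ ih =>
    change mn (Sum.elim (norm B) (norm (ncopy B (k+1)))) (_ + _) ≤ _
    rw [mn_add, mn_map, mn_map]
    change mn (norm B) _ + mn (norm (ncopy B (k+1))) _ ≤ _
    have := ih W.tail
    cases W with
    | nil => simpa [mn] using this
    | cons w W =>
      rw [← Multiset.cons_coe, mn_cons]
      simp only [List.headD_cons, List.tail_cons] at *
      omega

theorem cop_reflect (B : NMW) (k : ℕ) (W W' : List (Multiset (El B)))
    (hW : W.length ≤ k) (hW' : W'.length ≤ k)
    (h : W.length = W'.length ∨ ∀ w ∈ W, w ≠ 0)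
    (hle : MLe (le (ncopy B k)) (cop B k W) (cop B k W')) :
    MLe (MLe (le B)) (W : Multiset (Multiset (El B))) (W' : Multiset (Multiset (El B))) := by
  induction k using Nat.twoStepInduction generalizing W W' with
  | zero =>
    have : W = [] := List.length_eq_zero_iff.1 (by omega)
    subst this; exact MLe.zero _
  | one =>
    match W, W' with
    | [], _ => exact MLe.zero _
    | w :: W, [] =>
      rcases h with h | h
      · simp at h
      · have : Multiset.card w ≤ Multiset.card (0 : Multiset (El B)) := MLe.card_le hle
        simp at this
        exact absurd this (h w (by simp))
    | [w], [w'] =>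
      have hle' : MLe (le B) w w' := hle
      exact MLe.cons (m := 0) (m' := 0) hle' (MLe.zero _)
    | _ :: _ :: _, _ => simp at hW
    | _, _ :: _ :: _ => simp at hW'
  | more k _ ih =>
    obtain ⟨h1, h2⟩ := MLe.parts hle
    match W, W' with
    | [], _ => exact MLe.zero _
    | w :: W, [] =>
      rcases h with h | h
      · simp at h
      · have := MLe.card_le h1
        simp at this
        exact absurd this (h w (by simp))
    | w :: W, w' :: W' =>
      refine MLe.cons h1 (ih W W' (by simpa using hW) (by simpa using hW') ?_ h2)
      rcases h with h | h
      · left; simpa using h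
      · right; intro v hv; exact h v (by simp [hv])

theorem sumList_inj (g : NMW → NMW) (Rs : List NMW) :
    ∃ ι : (i : Fin Rs.length) → El (g (Rs.get i)) → El (sumList (Rs.map g)),
      (∀ i u, norm _ (ι i u) = norm _ u) ∧
      (∀ i j u v, le _ (ι i u) (ι j v) → i = j) ∧
      (∀ i u v, le _ (ι i u) (ι i v) → le _ u v) := by
  induction Rs with
  | nil => exact ⟨fun i => i.elim0, fun i => i.elim0, fun i => i.elim0, fun i => i.elim0⟩
  | cons X Rs ih =>
    match Rs, ih with
    | [], _ =>
      refine ⟨fun i => Fin.cases (motive := fun i => El (g ([X].get i)) → El (g X)) id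
        (fun i => i.elim0) i, ?_, ?_, ?_⟩
      · intro i u
        induction i using Fin.cases with
        | zero => rfl
        | succ i => exact i.elim0
      · intro i j _ _ _
        exact Subsingleton.elim (α := Fin 1) i j
      · intro i u v h
        induction i using Fin.cases with
        | zero => exact h
        | succ i => exact i.elim0
    | Y :: Rs, ⟨ι, h1, h2, h3⟩ =>
      refine ⟨fun i => Fin.cases (motive := fun i => El (g ((X :: Y :: Rs).get i)) →
        El (g X) ⊕ El (sumList ((Y :: Rs).map g))) (fun u => Sum.inl u)
        (fun i u => Sum.inr (ι i u)) i, ?_, ?_, ?_⟩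
      · intro i u
        induction i using Fin.cases with
        | zero => rfl
        | succ i => exact h1 i u
      · intro i j u v h
        induction i using Fin.cases with
        | zero =>
          induction j using Fin.cases with
          | zero => rfl
          | succ j => cases h
        | succ i =>
          induction j using Fin.cases with
          | zero => cases h
          | succ j =>
            cases h with
            | inr h => rw [h2 i j _ _ h]
      · intro i u v h
        induction i using Fin.cases with
        | zero => cases h with | inl h => exact h
        | succ i => cases h with | inr h => exact h3 i _ _ h

/-- The relation used inside the `i`-th summand in case (iii). -/
def Qr (B R : NMW) (k i : ℕ) (b : Multiset (El B)) (ρ : Multiset (El B) → El R → Prop)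
    (x : Multiset (Multiset (El B))) (z : Multiset (El (ncopy B k) ⊕ El R)) : Prop :=
  ∃ (W : List (Multiset (El B))) (s : Multiset (Multiset (El B))) (s' : Multiset (El R)),
    x = (W : Multiset (Multiset (El B))) + s ∧ W.length ≤ k ∧ Multiset.Rel ρ s s' ∧
    z = (cop B k W).map Sum.inl + s'.map Sum.inr ∧
    ((b ≠ 0 ∧ ∀ w ∈ W, w ≠ 0) ∨ (b = 0 ∧ W.length = i))

theorem Qr_norm {B R : NMW} {k i : ℕ} {b : Multiset (El B)} {ρ : Multiset (El B) → El R → Prop}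
    (hρ : ∀ x y, ρ x y → norm R y ≤ norm (.mset B) x)
    {x : Multiset (Multiset (El B))} {z : Multiset (El (ncopy B k) ⊕ El R)}
    (h : Qr B R k i b ρ x z) :
    norm (.mset (.sum (ncopy B k) R)) z ≤ norm (.mset (.mset B)) x := by
  obtain ⟨W, s, s', rfl, _, hs, rfl, _⟩ := h
  change mn (Sum.elim (norm (ncopy B k)) (norm R)) _ ≤ mn (mn (norm B)) _
  rw [mn_add, mn_add, mn_map, mn_map]
  exact add_le_add (mn_cop B k W) (mn_rel hρ hs)

theorem Qr_reflect {B R : NMW} {k i : ℕ} {b : Multiset (El B)}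
    {ρ : Multiset (El B) → El R → Prop}
    (hρ : ∀ x y x' y', ρ x y → ρ x' y' → le R y y' → le (.mset B) x x')
    {x x' : Multiset (Multiset (El B))} {z z' : Multiset (El (ncopy B k) ⊕ El R)}
    (h : Qr B R k i b ρ x z) (h' : Qr B R k i b ρ x' z')
    (hle : le (.mset (.sum (ncopy B k) R)) z z') : le (.mset (.mset B)) x x' := by
  obtain ⟨W, s, t, rfl, hW, hs, rfl, hb⟩ := h
  obtain ⟨W', s', t', rfl, hW', hs', rfl, hb'⟩ := h'
  obtain ⟨h1, h2⟩ := MLe.parts hle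
  refine MLe.add (cop_reflect B k W W' hW hW' ?_ h1) (MLe.pull hρ hs hs' h2)
  rcases hb with hb | hb
  · exact Or.inr hb.2
  · rcases hb' with hb' | hb'
    · exact absurd hb.1 hb'.1
    · exact Or.inl (hb.2.trans hb'.2.symm)

open Classical in
theorem Qr_exists (B : NMW) (k e : ℕ) (F : List (Multiset (El B)))
    (hk : F.length + e ≤ k + 1) (x : Multiset (Multiset (El B)))
    (hx : ¬ MLe (MLe (le B)) ((F ++ List.replicate e 0 : List (Multiset (El B))) :
      Multiset (Multiset (El B))) x) :
    (∃ f ∈ F, Multiset.card (x.filter (MLe (le B) f)) ≤ k) ∨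
    (F.length ≤ Multiset.card x ∧ Multiset.card x < F.length + e) := by
  by_cases hFx : MLe (MLe (le B)) (F : Multiset (Multiset (El B))) x
  · right
    refine ⟨by simpa using hFx.card_le, ?_⟩
    by_contra hc
    apply hx
    obtain ⟨t, ht, hr⟩ := hFx
    obtain ⟨v, rfl⟩ := Multiset.le_iff_exists_add.1 ht
    have hct := Multiset.card_eq_card_of_rel hr
    rw [Multiset.card_add, ← hct, Multiset.coe_card] at hc
    rw [← Multiset.coe_add]
    refine MLe.add ⟨t, le_rfl, hr⟩ (greedy _ _ ?_)
    intro b hb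
    have hb0 : b = 0 := by
      rw [Multiset.mem_coe] at hb
      exact List.eq_of_mem_replicate hb
    subst hb0
    rw [Multiset.filter_eq_self.2 (fun y _ => MLe.zero y)]
    simp
    omega
  · left
    by_contra hc
    push Not at hc
    apply hFx
    apply greedy
    intro f hf
    have := hc f (by simpa using hf)
    simp only [Multiset.coe_card]
    omega

theorem rel_exists {α β : Type} {ρ : α → β → Prop} (s : Multiset α)
    (h : ∀ a ∈ s, ∃ b, ρ a b) : ∃ s', Multiset.Rel ρ s s' := by
  induction s using Multiset.induction_on with
  | empty => exact ⟨0, Multiset.Rel.zero⟩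
  | cons a s ih =>
    obtain ⟨b, hb⟩ := h a (by simp)
    obtain ⟨s', hs'⟩ := ih (fun c hc => h c (by simp [hc]))
    exact ⟨b ::ₘ s', hs'.cons hb⟩

open Classical in
theorem rf_mm (B : NMW) (n : ℕ) (hn : 1 ≤ n) (e : ℕ) (F : List (Multiset (El B)))
    (hF : ∀ f ∈ F, f ≠ 0) (L : List (Multiset (El B))) (hL : L = F ++ List.replicate e 0)
    (hLn : L.length ≤ n) (Rs : List NMW) (hlen : L.length = Rs.length)
    (h : ∀ (i : ℕ) (hi : i < L.length) (hj : i < Rs.length),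
      Rf (.mset B) (fun x => ¬ le (.mset B) (L.get ⟨i, hi⟩) x) (Rs.get ⟨i, hj⟩)) :
    Rf (.mset (.mset B))
      (fun x => ¬ le (.mset (.mset B)) (Multiset.ofList L) x)
      (sumList (Rs.map (fun Ri => .mset (.sum (ncopy B (n - 1)) Ri)))) := by
  obtain ⟨ι, i1, i2, i3⟩ := sumList_inj (fun Ri => .mset (.sum (ncopy B (n - 1)) Ri)) Rs
  choose ρ e1 n1 r1 using fun i : Fin Rs.length => h i.1 (hlen.symm ▸ i.2) i.2
  refine ⟨fun x z => ∃ (i : Fin Rs.length)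
    (u : Multiset (El (ncopy B (n - 1)) ⊕ El (Rs.get i))),
    Qr B (Rs.get i) (n - 1) i.1 (L.get ⟨i.1, hlen.symm ▸ i.2⟩) (ρ i) x u ∧ z = ι i u, ?_, ?_, ?_⟩
  · intro (x : Multiset (Multiset (El B))) hx
    have hlen' : L.length = F.length + e := by simp [hL]
    have hx' : ¬ MLe (MLe (le B)) ((F ++ List.replicate e 0 : List (Multiset (El B))) :
      Multiset (Multiset (El B))) x := by
      rw [← hL]; exact hx
    rcases Qr_exists B (n - 1) e F (by omega) x hx' with ⟨f, hf, hc⟩ | ⟨ha, hb⟩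
    · have hfL : f ∈ L := by simp [hL, hf]
      obtain ⟨⟨i, hi⟩, rfl⟩ := List.get_of_mem hfL
      obtain ⟨s, hxs, hs⟩ : ∃ s : Multiset (Multiset (El B)),
          x = x.filter (MLe (le B) (L.get ⟨i, hi⟩)) + s ∧
            ∀ w ∈ s, ¬ MLe (le B) (L.get ⟨i, hi⟩) w :=
        ⟨_, (Multiset.filter_add_not (MLe (le B) (L.get ⟨i, hi⟩)) x).symm,
          fun w hw => (Multiset.mem_filter.1 hw).2⟩
      obtain ⟨s', hs'⟩ := rel_exists (ρ := ρ ⟨i, hlen ▸ hi⟩)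
        s (fun w hw => e1 ⟨i, hlen ▸ hi⟩ w (hs w hw))
      refine ⟨_, ⟨i, hlen ▸ hi⟩, _, ⟨(x.filter (MLe (le B) (L.get ⟨i, hi⟩))).toList, _, s',
        ?_, ?_, hs', rfl, Or.inl ⟨hF _ hf, ?_⟩⟩, rfl⟩
      · rw [Multiset.coe_toList]
        exact hxs
      · simpa using hc
      · intro w hw h0
        rw [Multiset.mem_toList, Multiset.mem_filter] at hw
        have := hw.2.card_le
        rw [h0] at this
        simp at this
        exact hF _ hf this
    · have hi : Multiset.card x < L.length := by omega
      refine ⟨_, ⟨Multiset.card x, hlen ▸ hi⟩, _, ⟨x.toList, 0, 0, ?_, ?_, Multiset.Rel.zero, rfl,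
        Or.inr ⟨?_, ?_⟩⟩, rfl⟩
      · simp
      · simp; omega
      · subst hL
        simp [List.getElem_append_right ha]
      · simp
  · rintro x z ⟨i, u, hu, rfl⟩
    exact (i1 i u).le.trans (Qr_norm (n1 i) hu)
  · rintro x z x' z' ⟨i, u, hu, rfl⟩ ⟨j, v, hv, rfl⟩ hle
    have := i2 _ _ _ _ hle
    subst this
    exact Qr_reflect (r1 i) hu hv (i3 _ _ _ hle)

open Classical in
theorem good_mset (n : ℕ) (hn : 1 ≤ n) (B : NMW) : ∀ a : El (.mset B), norm (.mset B) a ≤ n →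
    ∃ R, RRel n (.mset B) a R ∧ Rf (.mset B) (fun x => ¬ le (.mset B) a x) R := by
  induction B with
  | empty =>
    intro (a : Multiset Empty) _
    refine ⟨.empty, RRel.base a, fun _ _ => False, ?_, ?_, ?_⟩
    · intro (x : Multiset Empty) hx
      have ha : a = 0 := Multiset.eq_zero_of_forall_notMem (fun y => y.elim)
      exact absurd (ha ▸ MLe.zero x) hx
    · intro _ _ h; exact h.elim
    · intro _ _ _ _ h; exact h.elim
  | sum B₁ B₂ ih₁ ih₂ =>
    intro (a : Multiset (El B₁ ⊕ El B₂)) ha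
    change mn (Sum.elim (norm B₁) (norm B₂)) a ≤ n at ha
    rw [mn_split] at ha
    obtain ⟨R₁, h1, h1'⟩ := ih₁ (a.filterMap Sum.getLeft?) (le_trans (Nat.le_add_right _ _) ha)
    obtain ⟨R₂, h2, h2'⟩ := ih₂ (a.filterMap Sum.getRight?) (le_trans (Nat.le_add_left _ _) ha)
    exact ⟨_, RRel.msum a h1 h2, rf_msum a h1' h2'⟩
  | mset B ih =>
    intro (a : Multiset (Multiset (El B))) ha
    change mn (mn (norm B)) a ≤ n at ha
    set F := (a.filter (fun b => b ≠ 0)).toList with hF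
    set e := Multiset.card (a.filter (fun b => ¬ b ≠ 0)) with he
    obtain ⟨L, hL⟩ : ∃ L, L = F ++ List.replicate e 0 := ⟨_, rfl⟩
    have hLa : (L : Multiset (Multiset (El B))) = a := by
      have h0 : a.filter (fun b => ¬ b ≠ 0) = Multiset.replicate e 0 := by
        rw [Multiset.eq_replicate]
        refine ⟨he.symm, fun b hb => ?_⟩
        simpa using (Multiset.mem_filter.1 hb).2
      rw [hL, ← Multiset.coe_add, hF, Multiset.coe_toList, Multiset.coe_replicate, ← h0,
        Multiset.filter_add_not]
    have hex : ∀ i : Fin L.length, ∃ R, RRel n (.mset B) (L.get i) R ∧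
        Rf (.mset B) (fun x => ¬ le (.mset B) (L.get i) x) R := by
      intro i
      apply ih
      have hm : L.get i ∈ a := by
        rw [← hLa]; exact List.get_mem L i
      exact le_trans (le_mn (mn (norm B)) hm) ha
    choose R hR hRf using hex
    have hlen : L.length = (List.ofFn R).length := by simp
    have hLn : L.length ≤ n := by
      have := card_le_mn (mn (norm B)) a
      rw [← hLa, Multiset.coe_card] at this
      rw [hLa] at this
      omega
    refine ⟨sumList ((List.ofFn R).map (fun Ri => .mset (.sum (ncopy B (n - 1)) Ri))), ?_, ?_⟩
    · rw [← hLa]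
      refine RRel.mm L (List.ofFn R) hlen ?_
      intro i hi hj
      have : (List.ofFn R).get ⟨i, hj⟩ = R ⟨i, hi⟩ := by simp
      rw [this]
      exact hR ⟨i, hi⟩
    · rw [← hLa]
      refine rf_mm B n hn e F ?_ L hL hLn (List.ofFn R) hlen ?_
      · intro f hf
        rw [hF, Multiset.mem_toList, Multiset.mem_filter] at hf
        exact hf.2
      · intro i hi hj
        have : (List.ofFn R).get ⟨i, hj⟩ = R ⟨i, hi⟩ := by simp
        rw [this]
        exact hRf ⟨i, hi⟩


theorem good_all (n : ℕ) (hn : 1 ≤ n) (A : NMW) (hA : SumOfMsets A) :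
    ∀ a : El A, norm A a ≤ n →
    ∃ R, RRel n A a R ∧ Rf A (fun x => ¬ le A a x) R := by
  induction hA with
  | mset B => exact good_mset n hn B
  | @sum X Y _ _ ihX ihY =>
    rintro (a | a) ha
    · obtain ⟨R, hR, ρ, e1, n1, r1⟩ := ihX a ha
      refine ⟨_, RRel.sumL a hR, fun x z => Sum.LiftRel ρ (fun u v => u = v) x z, ?_, ?_, ?_⟩
      · rintro (x | x) hx
        · obtain ⟨y, hy⟩ := e1 x (fun h => hx (Sum.LiftRel.inl h))
          exact ⟨Sum.inl y, Sum.LiftRel.inl hy⟩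
        · exact ⟨Sum.inr x, Sum.LiftRel.inr rfl⟩
      · rintro _ _ (h | h)
        · exact n1 _ _ h
        · subst h; exact le_rfl
      · rintro _ _ _ _ (h | h) (h' | h') hle
        · cases hle with | inl hle => exact Sum.LiftRel.inl (r1 _ _ _ _ h h' hle)
        · cases hle
        · cases hle
        · subst h; subst h'
          cases hle with | inr hle => exact Sum.LiftRel.inr hle
    · obtain ⟨R, hR, ρ, e1, n1, r1⟩ := ihY a ha
      refine ⟨_, RRel.sumR a hR, fun x z => Sum.LiftRel (fun u v => u = v) ρ x z, ?_, ?_, ?_⟩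
      · rintro (x | x) hx
        · exact ⟨Sum.inl x, Sum.LiftRel.inl rfl⟩
        · obtain ⟨y, hy⟩ := e1 x (fun h => hx (Sum.LiftRel.inr h))
          exact ⟨Sum.inr y, Sum.LiftRel.inr hy⟩
      · rintro _ _ (h | h)
        · subst h; exact le_rfl
        · exact n1 _ _ h
      · rintro _ _ _ _ (h | h) (h' | h') hle
        · subst h; subst h'
          cases hle with | inl hle => exact Sum.LiftRel.inl hle
        · cases hle
        · cases hle
        · cases hle with | inr hle => exact Sum.LiftRel.inr (r1 _ _ _ _ h h' hle)

end NMW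

/-- Reflection of complements of principal filters in nested multiset
nwqos: for every nested multiset nwqo `A` of one of the forms `M(Γ₀)`, `M(Σ_{i=1}^d B_i)`
with `d ≥ 2`, `M(M(B))`, or `Σ_{i=1}^d M(B_i)` with `d ≥ 2`, every `n ≥ 1` and every
`a ∈ A` with `|a|_A ≤ n`, there exists a reflection `r : A/a ↪ R_n(A,a)`, i.e. a map from
`A/a = {x ∈ A : a ≰ x}` (with the induced order and norm) into `R_n(A,a)` such that
`r(x) ≤ r(y)` implies `x ≤ y`, and `|r(x)| ≤ |x|` for all `x`. -/
theorem nmw_residual_reflection (n : ℕ) (hn : 1 ≤ n) (A : NMW) (hA : NMW.GoodForm A)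
    (a : NMW.El A) (ha : NMW.norm A a ≤ n) :
    ∃ R : NMW, NMW.RRel n A a R ∧
      ∃ r : {x : NMW.El A // ¬ NMW.le A a x} → NMW.El R,
        (∀ x y : {x : NMW.El A // ¬ NMW.le A a x},
            NMW.le R (r x) (r y) → NMW.le A x.1 y.1) ∧
        (∀ x : {x : NMW.El A // ¬ NMW.le A a x}, NMW.norm R (r x) ≤ NMW.norm A x.1) := by
  have hS : NMW.SumOfMsets A := by
    rcases hA with ⟨B, rfl⟩ | ⟨X, Y, rfl, hX, hY⟩
    · exact NMW.SumOfMsets.mset B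
    · exact NMW.SumOfMsets.sum hX hY
  obtain ⟨R, hR, ρ, e1, n1, r1⟩ := NMW.good_all n hn A hS a ha
  choose r hr using fun x : {x : NMW.El A // ¬ NMW.le A a x} => e1 x.1 x.2
  exact ⟨R, hR, r, fun x y h => r1 _ _ _ _ (hr x) (hr y) h, fun x => n1 _ _ (hr x)⟩
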